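/- PCCFL is closed under ε-free substitutions: if L ∈ PCCFL is a language over a finite alphabet Σ, and s assigns to each letter a ∈ Σ a language s(a) ∈ PCCFL with ε ∉ s(a), then the substitution L[s] — consisting of all words obtained from some word a₁a₂…a_k ∈ L by replacing each letter a_i by an arbitrary word of s(a_i), i.e., L[s] = ⋃_{a₁…a_k ∈ L} s(a₁)·s(a₂)·…·s(a_k) — belongs to PCCFL. In particular, PCCFL is closed under images of homomorphisms h with h(a) ≠ ε for every letter a. -/

import Mathlib

/-- `IsInterleaving w v u` means `u` is an interleaving of `w` and `v`. -/
inductive IsInterleaving {α : Type} : List α → List α → List α → Prop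
  | nil : IsInterleaving [] [] []
  | left {a : α} {w v u : List α} : IsInterleaving w v u → IsInterleaving (a :: w) v (a :: u)
  | right {a : α} {w v u : List α} : IsInterleaving w v u → IsInterleaving w (a :: v) (a :: u)

/-- Shuffle of two languages. -/
def shuffleLang {α : Type} (L K : Set (List α)) : Set (List α) :=
  {u | ∃ w ∈ L, ∃ v ∈ K, IsInterleaving w v u}

/-- A partially-commutative context-free grammar in Greibach form. -/
structure PCGrammar (α : Type) : Type 1 where
  V : Type
  finV : Finite V
  start : V
  prods : Set (V × α × List V)
  finP : prods.Finite
  indep : V → V → Prop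
  indep_symm : ∀ {X Y : V}, indep X Y → indep Y X
  indep_irrefl : ∀ X : V, ¬ indep X X

/-- `PCDerives G γ w` : configuration `γ` derives the empty configuration producing word `w`,
using production steps (at the head) and swap steps of independent adjacent nonterminals. -/
inductive PCDerives {α : Type} (G : PCGrammar α) : List G.V → List α → Prop
  | nil : PCDerives G [] []
  | prod {X : G.V} {a : α} {γ β : List G.V} {w : List α} :
      (X, a, γ) ∈ G.prods → PCDerives G (γ ++ β) w → PCDerives G (X :: β) (a :: w)
  | swap {η β : List G.V} {X Y : G.V} {w : List α} :
      G.indep X Y → PCDerives G (η ++ Y :: X :: β) w → PCDerives G (η ++ X :: Y :: β) w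

/-- The language generated by a PC-grammar. -/
def PCGrammar.lang {α : Type} (G : PCGrammar α) : Set (List α) :=
  {w | PCDerives G [G.start] w}

/-- The class of partially-commutative context-free languages. -/
def IsPCCFL {α : Type} (L : Set (List α)) : Prop :=
  ∃ G : PCGrammar α, G.lang = L

/-- The dependence relation (complement of independence) is transitive. -/
def PCGrammar.depTransitive {α : Type} (G : PCGrammar α) : Prop :=
  ∀ X Y Z : G.V, ¬ G.indep X Y → ¬ G.indep Y Z → ¬ G.indep X Z

/-- The subclass of PCCFL given by grammars with transitive dependence. -/
def IsTrPCCFL {α : Type} (L : Set (List α)) : Prop :=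
  ∃ G : PCGrammar α, G.depTransitive ∧ G.lang = L

/-- Terms of a PA-grammar (shuffle context-free grammar). -/
inductive PATerm (V : Type) : Type
  | eps : PATerm V
  | var (X : V) : PATerm V
  | seq (t u : PATerm V) : PATerm V
  | par (t u : PATerm V) : PATerm V

/-- Structural equivalence of PA-terms: associativity of both compositions,
commutativity of parallel composition, and neutrality of the empty term. -/
inductive PAEq {V : Type} : PATerm V → PATerm V → Prop
  | refl (t : PATerm V) : PAEq t t
  | symm {t u : PATerm V} : PAEq t u → PAEq u t
  | trans {t u v : PATerm V} : PAEq t u → PAEq u v → PAEq t v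
  | seq_assoc (t u v : PATerm V) : PAEq ((t.seq u).seq v) (t.seq (u.seq v))
  | par_assoc (t u v : PATerm V) : PAEq ((t.par u).par v) (t.par (u.par v))
  | par_comm (t u : PATerm V) : PAEq (t.par u) (u.par t)
  | seq_eps_left (t : PATerm V) : PAEq (PATerm.eps.seq t) t
  | seq_eps_right (t : PATerm V) : PAEq (t.seq PATerm.eps) t
  | par_eps (t : PATerm V) : PAEq (t.par PATerm.eps) t
  | seq_congr {t t' u u' : PATerm V} : PAEq t t' → PAEq u u' → PAEq (t.seq u) (t'.seq u')
  | par_congr {t t' u u' : PATerm V} : PAEq t t' → PAEq u u' → PAEq (t.par u) (t'.par u')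

/-- Single steps of a PA-grammar with production set `P`. -/
inductive PAStep {V α : Type} (P : Set (V × α × PATerm V)) : PATerm V → α → PATerm V → Prop
  | prod {X : V} {a : α} {t : PATerm V} : (X, a, t) ∈ P → PAStep P (PATerm.var X) a t
  | seq_left {t t' u : PATerm V} {a : α} : PAStep P t a t' → PAStep P (t.seq u) a (t'.seq u)
  | par_left {t t' u : PATerm V} {a : α} : PAStep P t a t' → PAStep P (t.par u) a (t'.par u)
  | par_right {t u u' : PATerm V} {a : α} : PAStep P u a u' → PAStep P (t.par u) a (t.par u')

/-- `PAGen P t w` : term `t` derives the empty term producing word `w`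
(terms are considered up to structural equivalence). -/
inductive PAGen {V α : Type} (P : Set (V × α × PATerm V)) : PATerm V → List α → Prop
  | done : PAGen P PATerm.eps []
  | eqv {t t' : PATerm V} {w : List α} : PAEq t t' → PAGen P t' w → PAGen P t w
  | step {t t' : PATerm V} {a : α} {w : List α} :
      PAStep P t a t' → PAGen P t' w → PAGen P t (a :: w)

/-- A PA-grammar (shuffle context-free grammar). -/
structure PAGrammar (α : Type) : Type 1 where
  V : Type
  finV : Finite V
  start : V
  prods : Set (V × α × PATerm V)
  finP : prods.Finite

/-- The language generated by a PA-grammar. -/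
def PAGrammar.lang {α : Type} (G : PAGrammar α) : Set (List α) :=
  {w | PAGen G.prods (PATerm.var G.start) w}

/-- The class of languages of PA-grammars (context-free grammars with shuffle). -/
def IsShuffleCFL {α : Type} (L : Set (List α)) : Prop :=
  ∃ G : PAGrammar α, G.lang = L

/-- A single swap of two adjacent letters independent according to `J`. -/
inductive AdjSwap {α : Type} (J : α → α → Prop) : List α → List α → Prop
  | swap (x y : List α) {a b : α} : J a b → AdjSwap J (x ++ a :: b :: y) (x ++ b :: a :: y)

/-- Trace equivalence: finitely many swaps of adjacent independent letters. -/
def TraceEquiv {α : Type} (J : α → α → Prop) : List α → List α → Prop :=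
  Relation.ReflTransGen (AdjSwap J)

/-- Trace closure of a language with respect to letter-independence `J`. -/
def traceClosure {α : Type} (J : α → α → Prop) (L : Set (List α)) : Set (List α) :=
  {w | ∃ v ∈ L, TraceEquiv J v w}

/-- The class of trace closures of context-free languages. -/
def IsTraceCFL {α : Type} (L : Set (List α)) : Prop :=
  ∃ J : α → α → Prop, (∀ a b, J a b → J b a) ∧ (∀ a, ¬ J a a) ∧
    ∃ L₀ : Language α, L₀.IsContextFree ∧ traceClosure J L₀ = L

/-- `listPow s m` is the word `s^m`. -/
def listPow {α : Type} (s : List α) (m : ℕ) : List α :=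
  (List.replicate m s).flatten

/-- The shuffle-pumping condition. -/
def ShufflePumping {α : Type} (L : Set (List α)) : Prop :=
  ∃ N : ℕ, ∀ w ∈ L, w.length > N →
    ∃ x y z s t : List α,
      (∃ yt u : List α, IsInterleaving y t yt ∧ IsInterleaving (s ++ yt) z u ∧ w = x ++ u) ∧
      1 ≤ s.length ∧ (s ++ y ++ t).length ≤ N ∧
      ∀ m : ℕ, x ++ listPow s m ++ y ++ listPow t m ++ z ∈ L

/-- The concatenation-pumping condition. -/
def ConcatPumping {α : Type} (L : Set (List α)) : Prop :=
  ∃ N : ℕ, ∀ w ∈ L, w.length > N →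
    ∃ x y z s t : List α,
      w = x ++ y ++ z ∧
      1 ≤ (s ++ t).length ∧ (s ++ t).length ≤ N ∧
      ∀ m : ℕ, x ++ listPow s m ++ y ++ listPow t m ++ z ∈ L

/-!
The grammar for `L[s]` runs a grammar `G` of `L`, but where `G` would apply `p : X →^a γ` it starts
a private copy, indexed by `p`, of the grammar of `s(a)`. Symbols of a copy depend on all symbols
outside that copy, so nothing can be swapped past an unfinished copy: it has to be rewritten to the
end, producing a word of `s(a)` as a contiguous block, before the simulation of `G` proceeds.
Indexing the copies by productions rather than by letters keeps the grammar finite over every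
alphabet. Homomorphisms are the case of singleton languages.
-/

theorem append_cons_cons_eq_append {V : Type*} {η ζ δ γ : List V} {X Y : V}
    (h : η ++ X :: Y :: ζ = δ ++ γ) :
    (∃ ζ', δ = η ++ X :: Y :: ζ' ∧ ζ = ζ' ++ γ) ∨
      (δ = η ++ [X] ∧ γ = Y :: ζ) ∨
      ∃ η', η = δ ++ η' ∧ γ = η' ++ X :: Y :: ζ := by
  rcases List.append_eq_append_iff.1 h with ⟨m, rfl, hm⟩ | ⟨m, rfl, rfl⟩
  · rcases m with _ | ⟨X', _ | ⟨Y', ζ'⟩⟩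
    · exact .inr (.inr ⟨[], by simp, hm.symm⟩)
    · obtain ⟨rfl, rfl⟩ := List.cons.inj hm
      exact .inr (.inl ⟨rfl, rfl⟩)
    · simp only [List.cons_append, List.cons.injEq] at hm
      obtain ⟨rfl, rfl, rfl⟩ := hm
      exact .inl ⟨ζ', rfl, rfl⟩
  · exact .inr (.inr ⟨m, rfl, rfl⟩)

namespace PCDerives

variable {α : Type} {G G' : PCGrammar α}

theorem append {γ δ : List G.V} {u v : List α} (hu : PCDerives G γ u) (hv : PCDerives G δ v) :
    PCDerives G (γ ++ δ) (u ++ v) := by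
  induction hu with
  | nil => exact hv
  | prod hp _ ih => exact .prod hp (by simpa using ih)
  | swap hi _ ih => simpa using PCDerives.swap hi (by simpa using ih)

theorem map (f : G.V → G'.V)
    (map_prods : ∀ {X a γ}, (X, a, γ) ∈ G.prods → (f X, a, γ.map f) ∈ G'.prods)
    (map_indep : ∀ {X Y}, G.indep X Y → G'.indep (f X) (f Y))
    {γ : List G.V} {w : List α} (h : PCDerives G γ w) : PCDerives G' (γ.map f) w := by
  induction h with
  | nil => exact .nil
  | prod hp _ ih => exact .prod (map_prods hp) (by simpa using ih)
  | swap hi _ ih => simpa using PCDerives.swap (map_indep hi) (by simpa using ih)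

theorem of_map (f : G.V → G'.V)
    (of_prods : ∀ {X a γ'}, (f X, a, γ') ∈ G'.prods →
      ∃ γ, (X, a, γ) ∈ G.prods ∧ γ' = γ.map f)
    (of_indep : ∀ {X Y}, G'.indep (f X) (f Y) → G.indep X Y)
    {γ : List G.V} {w : List α} (h : PCDerives G' (γ.map f) w) : PCDerives G γ w := by
  generalize hc : γ.map f = c at h
  induction h generalizing γ with
  | nil =>
    obtain rfl := List.map_eq_nil_iff.1 hc
    exact .nil
  | prod hp _ ih =>
    obtain ⟨X, β, rfl, rfl, rfl⟩ := List.map_eq_cons_iff.1 hc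
    obtain ⟨γ, hγ, rfl⟩ := of_prods hp
    exact .prod hγ (ih (by simp))
  | swap hi _ ih =>
    obtain ⟨η, _, rfl, rfl, hXY⟩ := List.map_eq_append_iff.1 hc
    obtain ⟨X, _, rfl, rfl, hY⟩ := List.map_eq_cons_iff.1 hXY
    obtain ⟨Y, β, rfl, rfl, rfl⟩ := List.map_eq_cons_iff.1 hY
    exact .swap (of_indep hi) (ih (by simp))

theorem nil_iff {w : List α} : PCDerives G [] w ↔ w = [] := by
  refine ⟨fun h => ?_, fun hw => hw ▸ .nil⟩
  generalize hc : [] = c at h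
  cases h with
  | nil => rfl
  | prod => cases hc
  | swap => simp at hc

theorem cons_inv {X : G.V} {β : List G.V} {w : List α} (h : PCDerives G (X :: β) w)
    (hX : ∀ Y ∈ β, ¬ G.indep X Y) :
    ∃ a γ u, w = a :: u ∧ (X, a, γ) ∈ G.prods ∧ PCDerives G (γ ++ β) u := by
  generalize hc : X :: β = c at h
  induction h generalizing β with
  | nil => cases hc
  | prod hp hd =>
    obtain ⟨rfl, rfl⟩ := List.cons.inj hc
    exact ⟨_, _, _, rfl, hp, hd⟩
  | @swap η ζ Y Z w hi _ ih =>
    rcases η with _ | ⟨X', η⟩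
    · obtain ⟨rfl, rfl⟩ := List.cons.inj hc
      exact absurd hi (hX Z (by simp))
    · obtain ⟨rfl, rfl⟩ := List.cons.inj hc
      obtain ⟨a, γ, u, rfl, hp, hd⟩ := ih (β := η ++ Z :: Y :: ζ) (by grind) rfl
      exact ⟨a, γ, u, rfl, hp, by simpa using PCDerives.swap (η := γ ++ η) hi (by simpa using hd)⟩

theorem cons_iff {X : G.V} {β : List G.V} {w : List α} (hX : ∀ Y ∈ β, ¬ G.indep X Y) :
    PCDerives G (X :: β) w ↔
      ∃ a γ u, w = a :: u ∧ (X, a, γ) ∈ G.prods ∧ PCDerives G (γ ++ β) u :=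
  ⟨fun h => h.cons_inv hX, fun ⟨_, _, _, hw, hp, hd⟩ => hw ▸ .prod hp hd⟩

theorem append_inv (A : Set G.V)
    (prods_subset : ∀ {X a γ}, (X, a, γ) ∈ G.prods → X ∈ A → ∀ Y ∈ γ, Y ∈ A)
    {δ γ : List G.V} {w : List α} (h : PCDerives G (δ ++ γ) w) (hδ : ∀ X ∈ δ, X ∈ A)
    (hdep : ∀ X ∈ A, ∀ Y ∈ γ, ¬ G.indep X Y) :
    ∃ u v, w = u ++ v ∧ PCDerives G δ u ∧ PCDerives G γ v := by
  generalize hc : δ ++ γ = c at h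
  induction h generalizing δ γ with
  | nil =>
    obtain ⟨rfl, rfl⟩ := List.append_eq_nil_iff.1 hc
    exact ⟨[], [], rfl, .nil, .nil⟩
  | @prod X a ξ β w hp hd ih =>
    rcases δ with _ | ⟨X', δ⟩
    · exact ⟨[], a :: w, rfl, .nil, by simpa [← hc] using PCDerives.prod hp hd⟩
    · obtain ⟨rfl, rfl⟩ := List.cons.inj hc
      have hξδ : ∀ Y ∈ ξ ++ δ, Y ∈ A := by
        have := prods_subset hp
        grind
      obtain ⟨u, v, rfl, hu, hv⟩ := ih hξδ hdep (by simp)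
      exact ⟨a :: u, v, rfl, .prod hp hu, hv⟩
  | @swap η ζ X Y w hi _ ih =>
    rcases append_cons_cons_eq_append hc.symm with ⟨ζ', rfl, rfl⟩ | ⟨rfl, rfl⟩ | ⟨η', rfl, rfl⟩
    · obtain ⟨u, v, rfl, hu, hv⟩ := ih (δ := η ++ Y :: X :: ζ') (by grind) hdep (by simp)
      exact ⟨u, v, rfl, .swap hi hu, hv⟩
    · exact absurd hi (hdep X (hδ X (by simp)) Y (by simp))
    · obtain ⟨u, v, rfl, hu, hv⟩ :=
        ih (γ := η' ++ Y :: X :: ζ) hδ (by grind) (by simp)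
      exact ⟨u, v, rfl, hu, .swap hi hv⟩

end PCDerives

/-- The substitution `L[s]`. -/
def substLang {α β : Type} (L : Set (List α)) (s : α → Set (List β)) : Set (List β) :=
  {w | ∃ l ∈ L, ∃ parts : List (List β),
    List.Forall₂ (fun a u => u ∈ s a) l parts ∧ w = parts.flatten}

theorem substLang_singleton {α β : Type} (L : Set (List α)) (h : α → List β) :
    substLang L (fun a => {h a}) = {w | ∃ l ∈ L, w = (l.map h).flatten} := by
  have forall₂_iff (l : List α) (parts : List (List β)) :
      List.Forall₂ (fun a u => u ∈ ({h a} : Set (List β))) l parts ↔ parts = l.map h := by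
    simp only [Set.mem_singleton_iff, eq_comm (b := h _), eq_comm (a := parts)]
    rw [← List.forall₂_map_left_iff (R := Eq), List.forall₂_eq_eq_eq]
  simp only [substLang, forall₂_iff, exists_eq_left]

namespace PCGrammar

section Substitution

variable {α β : Type} (G : PCGrammar α) (H : α → PCGrammar β)

/-- The nonterminals of the grammar for `L[s]`: those of `G`, and for every production of `G` a copy
of the grammar `H a` belonging to the letter `a` it produces. -/
abbrev SubstV : Type :=
  G.V ⊕ (Σ p : G.prods, (H p.1.2.1).V)

/-- The independence relation of the grammar for `L[s]`: only symbols of `G`, or symbols of the same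
copy, may be independent. -/
inductive SubstIndep : G.SubstV H → G.SubstV H → Prop
  | outer {X Y : G.V} : G.indep X Y → SubstIndep (.inl X) (.inl Y)
  | inner {p : G.prods} {X Y : (H p.1.2.1).V} :
      (H p.1.2.1).indep X Y → SubstIndep (.inr ⟨p, X⟩) (.inr ⟨p, Y⟩)

/-- The productions of the grammar for `L[s]` that simulate a production `p : X →^a γ` of `G`. Since
a PC-grammar has no ε-productions, `p` is fused with the first production of its copy of `H a`. -/
def substOuterProds (p : G.prods) : Set (G.SubstV H × β × List (G.SubstV H)) :=
  (fun q => (.inl p.1.1, q.2.1, q.2.2.map (fun X => .inr ⟨p, X⟩) ++ p.1.2.2.map .inl)) ''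
    {q ∈ (H p.1.2.1).prods | q.1 = (H p.1.2.1).start}

/-- The productions of the grammar for `L[s]` inside the copy belonging to `p`. -/
def substInnerProds (p : G.prods) : Set (G.SubstV H × β × List (G.SubstV H)) :=
  (fun q => (.inr ⟨p, q.1⟩, q.2.1, q.2.2.map (fun X => .inr ⟨p, X⟩))) '' (H p.1.2.1).prods

/-- The grammar for `L[s]`, where `G` generates `L` and `H a` generates `s a`. -/
def subst : PCGrammar β where
  V := G.SubstV H
  finV := by
    have := G.finV
    have := G.finP.to_subtype
    have := fun a => (H a).finV
    infer_instance
  start := .inl G.start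
  prods := ⋃ p : G.prods, G.substOuterProds H p ∪ G.substInnerProds H p
  finP := by
    have := G.finP.to_subtype
    exact Set.finite_iUnion fun p =>
      (((H p.1.2.1).finP.subset (Set.sep_subset _ _)).image _).union ((H p.1.2.1).finP.image _)
  indep := G.SubstIndep H
  indep_symm := by
    rintro _ _ (h | h)
    exacts [.outer (G.indep_symm h), .inner ((H _).indep_symm h)]
  indep_irrefl := by
    rintro _ (h | h)
    exacts [G.indep_irrefl _ h, (H _).indep_irrefl _ h]

/-- A nonterminal of `G`, as a nonterminal of the grammar for `L[s]`. -/
def substOuter (X : G.V) : (G.subst H).V :=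
  .inl X

/-- A nonterminal of the copy belonging to `p`, as a nonterminal of the grammar for `L[s]`. -/
def substInner (p : G.prods) (X : (H p.1.2.1).V) : (G.subst H).V :=
  .inr ⟨p, X⟩

variable {G H}

theorem substOuter_mem_prods_iff {X : G.V} {b : β} {c : List (G.subst H).V} :
    (G.substOuter H X, b, c) ∈ (G.subst H).prods ↔
      ∃ a γ, ∃ hp : (X, a, γ) ∈ G.prods, ∃ δ, ((H a).start, b, δ) ∈ (H a).prods ∧
        c = δ.map (G.substInner H ⟨(X, a, γ), hp⟩) ++ γ.map (G.substOuter H) := by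
  constructor
  · rintro ⟨_, ⟨⟨⟨X', a, γ⟩, hp⟩, rfl⟩, ⟨⟨_, b', δ⟩, ⟨hq, rfl⟩, heq⟩ | ⟨_, _, heq⟩⟩
    · cases heq
      exact ⟨a, γ, hp, δ, hq, rfl⟩
    · cases heq
  · rintro ⟨a, γ, hp, δ, hq, rfl⟩
    exact Set.mem_iUnion.2 ⟨⟨_, hp⟩, .inl ⟨_, ⟨hq, rfl⟩, rfl⟩⟩

theorem substInner_mem_prods_iff {p : G.prods} {X : (H p.1.2.1).V} {b : β}
    {c : List (G.subst H).V} :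
    (G.substInner H p X, b, c) ∈ (G.subst H).prods ↔
      ∃ δ, (X, b, δ) ∈ (H p.1.2.1).prods ∧ c = δ.map (G.substInner H p) := by
  constructor
  · rintro ⟨_, ⟨p', rfl⟩, ⟨_, _, heq⟩ | ⟨⟨X', b', δ⟩, hq, heq⟩⟩
    · cases heq
    · cases heq
      exact ⟨δ, hq, rfl⟩
  · rintro ⟨δ, hq, rfl⟩
    exact Set.mem_iUnion.2 ⟨p, .inr ⟨_, hq, rfl⟩⟩

theorem subst_indep_outer_outer_iff {X Y : G.V} :
    (G.subst H).indep (G.substOuter H X) (G.substOuter H Y) ↔ G.indep X Y :=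
  ⟨fun | .outer h => h, .outer⟩

theorem subst_indep_inner_inner_iff {p : G.prods} {X Y : (H p.1.2.1).V} :
    (G.subst H).indep (G.substInner H p X) (G.substInner H p Y) ↔ (H p.1.2.1).indep X Y :=
  ⟨fun | .inner h => h, .inner⟩

theorem not_subst_indep_inner_outer {p : G.prods} {X : (H p.1.2.1).V} {Y : G.V} :
    ¬ (G.subst H).indep (G.substInner H p X) (G.substOuter H Y) :=
  nofun

theorem derives_subst_map_inner_iff {p : G.prods} {δ : List (H p.1.2.1).V} {w : List β} :
    PCDerives (G.subst H) (δ.map (G.substInner H p)) w ↔ PCDerives (H p.1.2.1) δ w :=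
  ⟨.of_map _ substInner_mem_prods_iff.1 subst_indep_inner_inner_iff.1,
    .map _ (fun h => substInner_mem_prods_iff.2 ⟨_, h, rfl⟩) subst_indep_inner_inner_iff.2⟩

theorem derives_subst_inner_append_outer_inv {p : G.prods} {δ : List (H p.1.2.1).V}
    {γ : List G.V} {w : List β}
    (h : PCDerives (G.subst H) (δ.map (G.substInner H p) ++ γ.map (G.substOuter H)) w) :
    ∃ u v, w = u ++ v ∧ PCDerives (H p.1.2.1) δ u ∧
      PCDerives (G.subst H) (γ.map (G.substOuter H)) v := by
  obtain ⟨u, v, rfl, hu, hv⟩ := h.append_inv (Set.range (G.substInner H p))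
    (by
      rintro _ b c hc ⟨X, rfl⟩
      obtain ⟨δ, -, rfl⟩ := substInner_mem_prods_iff.1 hc
      simp)
    (by simp)
    (by simp [not_subst_indep_inner_outer])
  exact ⟨u, v, rfl, derives_subst_map_inner_iff.1 hu, hv⟩

theorem derives_subst_map_outer {γ : List G.V} {l : List α} (h : PCDerives G γ l)
    {parts : List (List β)} (hparts : List.Forall₂ (fun a u => u ∈ (H a).lang) l parts) :
    PCDerives (G.subst H) (γ.map (G.substOuter H)) parts.flatten := by
  induction h generalizing parts with
  | nil =>
    cases hparts
    exact .nil
  | prod hp _ ih =>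
    obtain _ | ⟨hu, hparts⟩ := hparts
    obtain ⟨b, δ, u, rfl, hq, hu⟩ := PCDerives.cons_inv hu (by simp)
    refine .prod (substOuter_mem_prods_iff.2 ⟨_, _, hp, δ, hq, rfl⟩) ?_
    rw [List.append_nil] at hu
    simpa using (derives_subst_map_inner_iff (p := ⟨_, hp⟩).2 hu).append (ih hparts)
  | swap hi _ ih =>
    simpa using
      PCDerives.swap (subst_indep_outer_outer_iff.2 hi) (by simpa using ih hparts)

theorem mem_substLang_of_derives_subst {γ : List G.V} {w : List β}
    (h : PCDerives (G.subst H) (γ.map (G.substOuter H)) w) :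
    w ∈ substLang {l | PCDerives G γ l} (fun a => (H a).lang) := by
  -- Splitting off a block does not give a subderivation, hence the outer induction on the word.
  induction hn : w.length using Nat.strong_induction_on generalizing γ w with | h n ih_length
  generalize hc : γ.map (G.substOuter H) = c at h
  induction h generalizing γ with
  | nil =>
    obtain rfl := List.map_eq_nil_iff.1 hc
    exact ⟨[], .nil, [], .nil, rfl⟩
  | prod hp hd =>
    obtain ⟨X, γ, rfl, rfl, rfl⟩ := List.map_eq_cons_iff.1 hc
    obtain ⟨a, ξ, hξ, δ, hδ, rfl⟩ := substOuter_mem_prods_iff.1 hp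
    rw [List.append_assoc, ← List.map_append] at hd
    obtain ⟨u, v, rfl, hu, hv⟩ := derives_subst_inner_append_outer_inv hd
    obtain ⟨l, hl, parts, hparts, rfl⟩ := ih_length v.length (by grind) hv rfl
    have hu : _ :: u ∈ (H a).lang := .prod hδ (by simpa using hu)
    exact ⟨a :: l, .prod hξ hl, (_ :: u) :: parts, .cons hu hparts, by simp⟩
  | swap hi _ ih =>
    obtain ⟨η, _, rfl, rfl, hXY⟩ := List.map_eq_append_iff.1 hc
    obtain ⟨X, _, rfl, rfl, hY⟩ := List.map_eq_cons_iff.1 hXY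
    obtain ⟨Y, β, rfl, rfl, rfl⟩ := List.map_eq_cons_iff.1 hY
    obtain ⟨l, hl, hparts⟩ := ih (γ := η ++ Y :: X :: β) hn (by simp)
    exact ⟨l, .swap (subst_indep_outer_outer_iff.1 hi) hl, hparts⟩

variable (G H) in
theorem lang_subst : (G.subst H).lang = substLang G.lang (fun a => (H a).lang) := by
  ext w
  constructor
  · exact mem_substLang_of_derives_subst (γ := [G.start])
  · rintro ⟨l, hl, parts, hparts, rfl⟩
    exact derives_subst_map_outer hl hparts

end Substitution

section Word

variable {α : Type} (a : α) (w : List α)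

/-- A grammar for the one-word language `{a :: w}`: the start symbol `none` produces `a` and leaves
one symbol `some i` for every position `i` of `w`. -/
def word : PCGrammar α where
  V := Option (Fin w.length)
  finV := inferInstance
  start := none
  prods := {(none, a, (List.finRange w.length).map some)} ∪ Set.range fun i => (some i, w[i], [])
  finP := (Set.finite_singleton _).union (Set.finite_range _)
  indep _ _ := False
  indep_symm := id
  indep_irrefl _ := id

/-- The nonterminal of `word a w` that produces the letter of `w` at position `i`. -/
def wordLetter (i : Fin w.length) : (word a w).V :=
  some i

variable {a w}

theorem start_mem_word_prods_iff {b : α} {γ : List (word a w).V} :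
    ((word a w).start, b, γ) ∈ (word a w).prods ↔
      b = a ∧ γ = (List.finRange w.length).map (wordLetter a w) := by
  constructor
  · rintro (h | ⟨i, h⟩) <;> cases h
    exact ⟨rfl, rfl⟩
  · rintro ⟨rfl, rfl⟩
    exact .inl rfl

theorem wordLetter_mem_word_prods_iff {i : Fin w.length} {b : α} {γ : List (word a w).V} :
    (wordLetter a w i, b, γ) ∈ (word a w).prods ↔ b = w[i] ∧ γ = [] := by
  constructor
  · rintro (h | ⟨j, h⟩) <;> cases h
    exact ⟨rfl, rfl⟩
  · rintro ⟨rfl, rfl⟩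
    exact .inr ⟨i, rfl⟩

theorem not_word_indep {X Y : (word a w).V} : ¬ (word a w).indep X Y :=
  id

theorem derives_word_map_wordLetter_iff {l : List (Fin w.length)} {u : List α} :
    PCDerives (word a w) (l.map (wordLetter a w)) u ↔ u = l.map w.get := by
  induction l generalizing u with
  | nil => exact PCDerives.nil_iff
  | cons i l ih =>
    simp [PCDerives.cons_iff, not_word_indep, wordLetter_mem_word_prods_iff, ih]

theorem lang_word : (word a w).lang = {a :: w} := by
  ext u
  change PCDerives (word a w) [(word a w).start] u ↔ u = a :: w
  simp [PCDerives.cons_iff, start_mem_word_prods_iff, derives_word_map_wordLetter_iff]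

end Word

end PCGrammar

theorem IsPCCFL.substLang {α β : Type} {L : Set (List α)} (hL : IsPCCFL L)
    {s : α → Set (List β)} (hs : ∀ a, IsPCCFL (s a)) : IsPCCFL (substLang L s) := by
  obtain ⟨G, rfl⟩ := hL
  choose H hH using hs
  obtain rfl : (fun a => (H a).lang) = s := funext hH
  exact ⟨G.subst H, G.lang_subst H⟩

theorem isPCCFL_singleton {α : Type} {w : List α} (hw : w ≠ []) : IsPCCFL {w} := by
  obtain ⟨a, w, rfl⟩ := List.exists_cons_of_ne_nil hw
  exact ⟨PCGrammar.word a w, PCGrammar.lang_word⟩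

theorem pccfl_closed_under_substitution_general (α β : Type) :
    (∀ (L : Set (List α)), IsPCCFL L →
      ∀ s : α → Set (List β), (∀ a, IsPCCFL (s a)) →
        IsPCCFL {w | ∃ l ∈ L, ∃ parts : List (List β),
          List.Forall₂ (fun a u => u ∈ s a) l parts ∧ w = parts.flatten}) ∧
    (∀ (L : Set (List α)), IsPCCFL L →
      ∀ h : α → List β, (∀ a, h a ≠ []) →
        IsPCCFL {w | ∃ l ∈ L, w = (l.map h).flatten}) := by
  refine ⟨fun L hL s hs => hL.substLang hs, fun L hL h hh => ?_⟩
  rw [← substLang_singleton]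
  exact hL.substLang fun a => isPCCFL_singleton (hh a)

/-- PCCFL is closed under ε-free substitutions; in particular it is
closed under images of homomorphisms `h` with `h a ≠ ε` for every letter `a`. -/
theorem pccfl_closed_under_substitution (α β : Type) [Finite α] [Finite β] :
    (∀ (L : Set (List α)), IsPCCFL L →
      ∀ s : α → Set (List β), (∀ a, IsPCCFL (s a)) → (∀ a, [] ∉ s a) →
        IsPCCFL {w | ∃ l ∈ L, ∃ parts : List (List β),
          List.Forall₂ (fun a u => u ∈ s a) l parts ∧ w = parts.flatten}) ∧
    (∀ (L : Set (List α)), IsPCCFL L →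
      ∀ h : α → List β, (∀ a, h a ≠ []) →
        IsPCCFL {w | ∃ l ∈ L, w = (l.map h).flatten}) := by
  obtain ⟨substitution, homomorphism⟩ := pccfl_closed_under_substitution_general α β
  exact ⟨fun L hL s hs _ => substitution L hL s hs, homomorphism⟩
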